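/- Fix integers n, m, k ≥ 1 and 1 ≤ l ≤ n. Let Ψ be the differential l-form on ℝ^N = J^k(n,m) given by Ψ = Σ_{t=0}^{m} Σ_{λ_0=0}^{l} Σ_{λ_1+…+λ_t = l−λ_0} Σ_{α_1<…<α_t} Σ_{i_1<…<i_{λ_0}} Σ (over strictly increasing tuples I^{α_1}_1<…<I^{α_1}_{λ_1}, …, I^{α_t}_1<…<I^{α_t}_{λ_t} of elements of S_k) A^{I^{α_1}_1…I^{α_t}_{λ_t}}_{i_1…i_{λ_0}} dx_{i_1}∧…∧dx_{i_{λ_0}}∧dp^{α_1}_{I^{α_1}_1}∧…∧dp^{α_1}_{I^{α_1}_{λ_1}}∧…∧dp^{α_t}_{I^{α_t}_{λ_t}}, where the coefficients A^{…}_{…} : ℝ^N → ℝ are smooth. Then for smooth functions z^1,…,z^m : ℝ^n → ℝ, the pullback (j^k z)*Ψ vanishes identically if and only if for every 1 ≤ ν_1 < … < ν_l ≤ n and every x ∈ ℝ^n: Σ_{t=1}^{m} Σ_{λ_0=0}^{l} Σ_{λ_1+…+λ_t = l−λ_0} Σ_{α_1<…<α_t} Σ (over all splittings {ν_1,…,ν_l}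 = {i_1<…<i_{λ_0}} ⊔ {j^{α_1}_1<j^{α_1}_2<…<j^{α_t}_{λ_t}}) Σ (over increasing tuples of the I's) A^{I^{α_1}_1…I^{α_t}_{λ_t}}_{i_1…i_{λ_0}}(j^k z(x)) · Δ^{I^{α_1}_1…I^{α_t}_{λ_t}}_{j^{α_1}_1…j^{α_t}_{λ_t}}(ν_1,…,ν_l; z^{α_1},…,z^{α_t})(x) = 0. -/

import Mathlib

/-!
Both sides of the equivalence are pointwise statements, and they agree term by term.
An alternating `l`-linear form on `ℝⁿ` vanishes iff it vanishes on all tuples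
`(e_{ν_1}, …, e_{ν_l})` of standard basis vectors with `ν_1 < … < ν_l`
(`alternating_eq_zero_of_strictMono`), so it suffices to see that the value of `(j^k z)^* Ψ` on
such a tuple is the left-hand side of the equation indexed by `ν` (`pullback_PsiM_apply`).

The differential of `j^k z` sends `e_j` to the vector with `dx_i`-component `δ_{ij}` and
`dp^α_I`-component `∂_j ∂_I z^α = ∂_I ∂_j z^α` (`dxF_fderiv_jetSec`, `dpF_fderiv_jetSec`), the last
equality being symmetry of second derivatives. Hence a monomial of `Ψ` contributes the determinant
of an `l × l` matrix `M`. If some `i ∈ s` is not among the `ν`'s, then the row of `dx_i` vanishes.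
Otherwise let `P` be the permutation matrix of the splitting, whose determinant is `sgn σ = ±1`.
The matrix `M Pᵀ` has its columns ordered as `i_1, …, i_{λ₀}, j_1, …`, so it is block lower
triangular with an identity block and the transpose of the matrix defining `H`; therefore
`det M = sgn σ · H` (`det_eq_splitSign_mul`).
-/


noncomputable section
namespace GMAE

/-- first-order partial derivative in the direction `x_i` -/
noncomputable def pd {n : ℕ} (i : Fin n) (f : (Fin n → ℝ) → ℝ) : (Fin n → ℝ) → ℝ :=
  fun x => fderiv ℝ f x (Pi.single i 1)

/-- iterated partial derivative along a list of coordinate directions -/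
noncomputable def pdList {n : ℕ} : List (Fin n) → ((Fin n → ℝ) → ℝ) → ((Fin n → ℝ) → ℝ)
  | [], f => f
  | i :: L, f => pdList L (pd i f)

/-- iterated partial derivative `∂_I` along a multiset of directions -/
noncomputable def pdM {n : ℕ} (I : Multiset (Fin n)) (f : (Fin n → ℝ) → ℝ) : (Fin n → ℝ) → ℝ :=
  pdList I.toList f

/-- `Σ_k`: symmetric multi-indices of length `1,…,k`; the component `j` consists of
the multi-indices of length `k - j`. -/
abbrev SigIdx (n k : ℕ) := Σ j : Fin k, Sym (Fin n) (k - j.val)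

/-- the inclusion of `S_k` (multi-indices of length exactly `k`) into `Σ_k` -/
def topIdx {n k : ℕ} (hk : 0 < k) (I : Sym (Fin n) k) : SigIdx n k := ⟨⟨0, hk⟩, I⟩

/-- the underlying multiset of a multi-index in `Σ_k` -/
def SigIdx.toMultiset {n k : ℕ} (p : SigIdx n k) : Multiset (Fin n) := ↑p.2

/-- index set for the coordinates `(x_i, z^α, p^α_I)` of the jet space `J^k(n,m)` -/
abbrev JIdx (n m k : ℕ) := Fin n ⊕ Fin m ⊕ (Fin m × SigIdx n k)

/-- the `k`-jet space `J^k(n,m) = ℝ^N`, `N = n + m + m⬝|Σ_k|` -/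
abbrev Jet (n m k : ℕ) := JIdx n m k → ℝ

/-- the coordinate `1`-form `dx_i` -/
def dxF {n m k : ℕ} (i : Fin n) : Jet n m k →ₗ[ℝ] ℝ := LinearMap.proj (Sum.inl i)
/-- the coordinate `1`-form `dz^α` -/
def dzF {n m k : ℕ} (α : Fin m) : Jet n m k →ₗ[ℝ] ℝ := LinearMap.proj (Sum.inr (Sum.inl α))
/-- the coordinate `1`-form `dp^α_I` -/
def dpF {n m k : ℕ} (α : Fin m) (I : SigIdx n k) : Jet n m k →ₗ[ℝ] ℝ :=
  LinearMap.proj (Sum.inr (Sum.inr (α, I)))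

/-- the `k`-jet section of `z = (z^1,…,z^m)` -/
noncomputable def jetSec {n m k : ℕ} (z : Fin m → (Fin n → ℝ) → ℝ) (x : Fin n → ℝ) :
    Jet n m k :=
  Sum.elim x (Sum.elim (fun α => z α x) fun p => pdM (SigIdx.toMultiset p.2) (z p.1) x)

/-- the singleton multi-index `(i)` as an element of `Σ_k` -/
def singIdx {n k : ℕ} (hk : 0 < k) (i : Fin n) : SigIdx n k :=
  ⟨⟨k - 1, by omega⟩, Sym.cast (show 1 = k - (k-1) by omega) (Sym.replicate 1 i)⟩

/-- `Ii`: the multi-index `I ∈ Σ_{k-1} ⊆ Σ_k` with `i` added, an element of `Σ_k` -/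
def consIdx {n k : ℕ} (p : SigIdx n k) (hp : 1 ≤ p.1.val) (i : Fin n) : SigIdx n k :=
  ⟨⟨p.1.val - 1, by omega⟩,
    Sym.cast (show (k - p.1.val) + 1 = k - (p.1.val - 1) by omega) (i ::ₛ p.2)⟩

/-- the contact `1`-form `ω^α_0 = dz^α - Σ_i p^α_i dx_i` at the point `u` -/
noncomputable def contact0 {n m k : ℕ} (hk : 0 < k) (α : Fin m) (u : Jet n m k) :
    Jet n m k →ₗ[ℝ] ℝ :=
  dzF α - ∑ i, u (Sum.inr (Sum.inr (α, singIdx hk i))) • dxF i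

/-- the contact `1`-form `ω^α_I = dp^α_I - Σ_i p^α_{Ii} dx_i`, for `I ∈ Σ_{k-1}`,
at the point `u` -/
noncomputable def contactP {n m k : ℕ} (α : Fin m) (p : SigIdx n k) (hp : 1 ≤ p.1.val)
    (u : Jet n m k) : Jet n m k →ₗ[ℝ] ℝ :=
  dpF α p - ∑ i, u (Sum.inr (Sum.inr (α, consIdx p hp i))) • dxF i

/-- the wedge product `θ_1 ∧ ⋯ ∧ θ_l` of `1`-forms, `(w_1,…,w_l) ↦ det (θ_a (w_b))` -/
noncomputable def wedge {E : Type*} [AddCommGroup E] [Module ℝ E] {l : ℕ}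
    (θ : Fin l → (E →ₗ[ℝ] ℝ)) : E [⋀^Fin l]→ₗ[ℝ] ℝ :=
  Matrix.detRowAlternating.compLinearMap (LinearMap.pi θ)

/-- pullback of a differential `l`-form along a map `ι` -/
noncomputable def pullback {E F : Type*} [NormedAddCommGroup E] [NormedSpace ℝ E]
    [NormedAddCommGroup F] [NormedSpace ℝ F] {l : ℕ}
    (ι : E → F) (Ψ : F → (F [⋀^Fin l]→ₗ[ℝ] ℝ)) (x : E) : E [⋀^Fin l]→ₗ[ℝ] ℝ :=
  (Ψ (ι x)).compLinearMap (fderiv ℝ ι x).toLinearMap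

end GMAE

namespace GMAE

variable {n m k : ℕ} [LinearOrder (Sym (Fin n) k)]

/-- the ordered list of the `1`-forms
`dx_{i_1},…,dx_{i_{λ₀}}, dp^{α_1}_{I^{α_1}_1},…,dp^{α_t}_{I^{α_t}_{λ_t}}` of a monomial of
`Ψ`: the `i`'s are the elements of `s` in increasing order, and the `p`-factors are listed
by increasing label `α` and, for each `α`, by the increasing enumeration of `T α ⊆ S_k`. -/
noncomputable def formListM (hk : 0 < k) (s : Finset (Fin n))
    (T : Fin m → Finset (Sym (Fin n) k)) : List (Jet n m k →ₗ[ℝ] ℝ) :=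
  (s.sort (· ≤ ·)).map dxF ++
    (List.finRange m).flatMap fun α => ((T α).sort (· ≤ ·)).map fun I => dpF α (topIdx hk I)

/-- the `l`-form `Ψ = Σ A^{I^{α_1}_1…I^{α_t}_{λ_t}}_{i_1…i_{λ₀}}
dx_{i_1}∧⋯∧dx_{i_{λ₀}}∧dp^{α_1}_{I^{α_1}_1}∧⋯∧dp^{α_t}_{I^{α_t}_{λ_t}}`
on `J^k(n,m)` with coefficients `A` -/
noncomputable def PsiM (hk : 0 < k)
    (A : Finset (Fin n) → (Fin m → Finset (Sym (Fin n) k)) → Jet n m k → ℝ) (l : ℕ)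
    (u : Jet n m k) : (Jet n m k) [⋀^Fin l]→ₗ[ℝ] ℝ :=
  ∑ s : Finset (Fin n), ∑ T : Fin m → Finset (Sym (Fin n) k),
    if h : (formListM hk s T).length = l then
      A s T u • wedge (fun a => (formListM hk s T).get (Fin.cast h.symm a))
    else 0

/-- the list of column labels `(α_1, I^{α_1}_1), …, (α_t, I^{α_t}_{λ_t})` -/
noncomputable def colListM (T : Fin m → Finset (Sym (Fin n) k)) :
    List (Fin m × Sym (Fin n) k) :=
  (List.finRange m).flatMap fun α => ((T α).sort (· ≤ ·)).map fun I => (α, I)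

/-- the tuple `(i_1,…,i_{λ₀}, j_1,…,j_{l-λ₀})` obtained from the splitting
`{ν_1,…,ν_l} = {i_1<…<i_{λ₀}} ⊔ {j_1<…<j_{l-λ₀}}` determined by the subset `s`
(the `i`'s) of the image of `ν`. -/
noncomputable def splitTuple {l : ℕ} (ν : Fin l → Fin n) (s : Finset (Fin n))
    (a : Fin l) : Fin n :=
  if h : a.val < s.card then s.orderIsoOfFin rfl ⟨a.val, h⟩
  else if h2 : a.val - s.card < ((Finset.image ν Finset.univ) \ s).card then
    ((Finset.image ν Finset.univ) \ s).orderIsoOfFin rfl ⟨a.val - s.card, h2⟩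
  else ν a

/-- `sgn(σ)`, where `σ` is the permutation rearranging `(ν_1,…,ν_l)` into
`(i_1,…,i_{λ₀}, j_1,…,j_{l-λ₀})`: the determinant of the permutation matrix of `σ`. -/
noncomputable def splitSign {l : ℕ} (ν : Fin l → Fin n) (s : Finset (Fin n)) : ℝ :=
  Matrix.det (Matrix.of fun a b => if ν b = splitTuple ν s a then (1 : ℝ) else 0)

/-- `Δ^{I^{α_1}_1…I^{α_t}_{λ_t}}_{j^{α_1}_1…j^{α_t}_{λ_t}}(ν_1,…,ν_l; z^{α_1},…,z^{α_t})
= sgn(σ)·H`, where `H` is the determinant of the matrix whose rows are indexed by the `j`'s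
(the complement of `s` in the image of `ν`, in increasing order), whose columns are indexed
by the pairs `(α_c, I^{α_c}_d)` (in lexicographic order), with entry
`∂_{I^{α_c}_d} ∂_{x_j} z^{α_c}`. -/
noncomputable def DeltaM {l : ℕ} (z : Fin m → (Fin n → ℝ) → ℝ) (ν : Fin l → Fin n)
    (s : Finset (Fin n)) (T : Fin m → Finset (Sym (Fin n) k)) (x : Fin n → ℝ) : ℝ :=
  splitSign ν s *
    Matrix.det (Matrix.of fun (r c : Fin (colListM T).length) =>
      if h : r.val < ((Finset.image ν Finset.univ) \ s).card then
        pdM ((((colListM T).get c).2 : Sym (Fin n) k) : Multiset (Fin n))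
          (pd (((Finset.image ν Finset.univ) \ s).orderIsoOfFin rfl ⟨r.val, h⟩)
            (z ((colListM T).get c).1)) x
      else 0)

/-- the left-hand side of the generalized Monge–Ampère equation indexed by
`ν = (ν_1 < … < ν_l)`, evaluated at `x` -/
noncomputable def gmaeLHSM
    (A : Finset (Fin n) → (Fin m → Finset (Sym (Fin n) k)) → Jet n m k → ℝ) {l : ℕ}
    (z : Fin m → (Fin n → ℝ) → ℝ) (ν : Fin l → Fin n) (x : Fin n → ℝ) : ℝ :=
  ∑ s ∈ (Finset.image ν Finset.univ).powerset, ∑ T : Fin m → Finset (Sym (Fin n) k),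
    if s.card + (colListM T).length = l then
      A s T (jetSec z x) * DeltaM z ν s T x
    else 0

end GMAE

namespace GMAE

/-! ### Iterated partial derivatives and the differential of the jet section -/

section Derivatives

variable {n : ℕ}

lemma contDiff_pd {f : (Fin n → ℝ) → ℝ} (hf : ContDiff ℝ (⊤ : ℕ∞) f) (i : Fin n) :
    ContDiff ℝ (⊤ : ℕ∞) (pd i f) := by
  unfold pd
  exact (hf.fderiv_right (m := ((⊤ : ℕ∞) : WithTop ℕ∞)) (by simp)).clm_apply contDiff_const

lemma contDiff_pdList (L : List (Fin n)) {f : (Fin n → ℝ) → ℝ}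
    (hf : ContDiff ℝ (⊤ : ℕ∞) f) : ContDiff ℝ (⊤ : ℕ∞) (pdList L f) := by
  induction L generalizing f with
  | nil => exact hf
  | cons i L ih => exact ih (contDiff_pd hf i)

lemma pd_comm {f : (Fin n → ℝ) → ℝ} (hf : ContDiff ℝ (⊤ : ℕ∞) f) (i j : Fin n) :
    pd i (pd j f) = pd j (pd i f) := by
  funext x
  have hd : DifferentiableAt ℝ (fderiv ℝ f) x :=
    ((hf.fderiv_right (m := ((⊤ : ℕ∞) : WithTop ℕ∞)) (by simp)).differentiable (by simp)) x
  have key : ∀ a b : Fin n, pd a (pd b f) x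
      = fderiv ℝ (fderiv ℝ f) x (Pi.single a 1) (Pi.single b 1) := by
    intro a b
    change fderiv ℝ (fun y => fderiv ℝ f y (Pi.single b 1)) x (Pi.single a 1) = _
    rw [fderiv_clm_apply hd (by fun_prop)]
    simp
  rw [key, key]
  have hs : IsSymmSndFDerivAt ℝ f x :=
    hf.contDiffAt.isSymmSndFDerivAt (by
      rw [minSmoothness_of_isRCLikeNormedField]; exact WithTop.coe_le_coe.2 le_top)
  exact hs _ _

lemma pd_pdList (L : List (Fin n)) {f : (Fin n → ℝ) → ℝ}
    (hf : ContDiff ℝ (⊤ : ℕ∞) f) (j : Fin n) : pd j (pdList L f) = pdList L (pd j f) := by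
  induction L generalizing f with
  | nil => rfl
  | cons i L ih =>
    change pd j (pdList L (pd i f)) = pdList L (pd i (pd j f))
    rw [ih (contDiff_pd hf i), pd_comm hf]

variable {m k : ℕ} {z : Fin m → (Fin n → ℝ) → ℝ}

lemma differentiable_jetSec (hz : ∀ α, ContDiff ℝ (⊤ : ℕ∞) (z α)) :
    Differentiable ℝ (jetSec (k := k) z) := by
  intro x
  rw [differentiableAt_pi]
  rintro (i | α | ⟨α, p⟩)
  · change DifferentiableAt ℝ (fun y : Fin n → ℝ => y i) x
    fun_prop
  · exact (hz α).differentiable (by simp) x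
  · exact (contDiff_pdList _ (hz α)).differentiable (by simp) x

lemma fderiv_jetSec_apply (hz : ∀ α, ContDiff ℝ (⊤ : ℕ∞) (z α)) (x v : Fin n → ℝ)
    (c : JIdx n m k) :
    fderiv ℝ (jetSec (k := k) z) x v c = fderiv ℝ (fun y => jetSec (k := k) z y c) x v := by
  have h := differentiable_jetSec (k := k) hz x
  rw [fderiv_pi (fun c => (differentiableAt_pi.1 h) c)]
  rfl

lemma dxF_fderiv_jetSec (hz : ∀ α, ContDiff ℝ (⊤ : ℕ∞) (z α)) (x : Fin n → ℝ) (i j : Fin n) :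
    dxF i (fderiv ℝ (jetSec (k := k) z) x (Pi.single j 1)) = if i = j then 1 else 0 := by
  change fderiv ℝ (jetSec (k := k) z) x (Pi.single j 1) (Sum.inl i) = _
  rw [fderiv_jetSec_apply hz]
  change fderiv ℝ (fun y : Fin n → ℝ => y i) x (Pi.single j 1) = _
  rw [(hasFDerivAt_apply i x).fderiv]
  simp [Pi.single_apply]

lemma dpF_fderiv_jetSec (hk : 0 < k) (hz : ∀ α, ContDiff ℝ (⊤ : ℕ∞) (z α)) (x : Fin n → ℝ)
    (α : Fin m) (I : Sym (Fin n) k) (j : Fin n) :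
    dpF α (topIdx hk I) (fderiv ℝ (jetSec (k := k) z) x (Pi.single j 1))
      = pdM (I : Multiset (Fin n)) (pd j (z α)) x := by
  change fderiv ℝ (jetSec (k := k) z) x (Pi.single j 1) (Sum.inr (Sum.inr (α, topIdx hk I))) = _
  rw [fderiv_jetSec_apply hz]
  exact congrFun (pd_pdList (I : Multiset (Fin n)).toList (hz α) j) x

end Derivatives

/-! ### Vanishing of alternating forms -/

/-- Alternation allows sorting the arguments, so only increasing tuples of basis vectors matter. -/
lemma alternating_eq_zero_of_strictMono {n l : ℕ} (f : (Fin n → ℝ) [⋀^Fin l]→ₗ[ℝ] ℝ)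
    (h : ∀ ν : Fin l → Fin n, StrictMono ν → f (fun b => Pi.single (ν b) 1) = 0) : f = 0 := by
  refine Module.Basis.ext_alternating (Pi.basisFun ℝ (Fin n)) fun v hv => ?_
  have h1 := h (v ∘ Tuple.sort v)
    ((Tuple.monotone_sort v).strictMono_of_injective (hv.comp (Tuple.sort v).injective))
  have h2 := f.map_perm (fun b => (Pi.single (v b) 1 : Fin n → ℝ)) (Tuple.sort v)
  have h3 : f ((fun b => (Pi.single (v b) 1 : Fin n → ℝ)) ∘ Tuple.sort v) = 0 := h1
  rw [h3] at h2
  have h4 : f (fun b => (Pi.single (v b) 1 : Fin n → ℝ)) = 0 := by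
    rcases Int.units_eq_one_or (Equiv.Perm.sign (Tuple.sort v)) with e | e <;>
      rw [e] at h2 <;> simpa using h2.symm
  simpa [Pi.basisFun_apply] using h4

/-! ### The permutation of a splitting and the block determinant -/

section Determinants

variable {n l : ℕ} {ν : Fin l → Fin n} {s : Finset (Fin n)}

lemma card_image_sdiff (hν : Function.Injective ν) (hs : s ⊆ Finset.image ν Finset.univ) :
    (Finset.image ν Finset.univ \ s).card = l - s.card := by
  rw [Finset.card_sdiff_of_subset hs, Finset.card_image_of_injective _ hν]
  simp

lemma splitTuple_of_lt (a : Fin l) (h : a.val < s.card) :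
    splitTuple ν s a = s.orderIsoOfFin rfl ⟨a.val, h⟩ := by
  simp [splitTuple, h]

lemma splitTuple_of_ge (a : Fin l) (h : s.card ≤ a.val)
    (h2 : a.val - s.card < (Finset.image ν Finset.univ \ s).card) :
    splitTuple ν s a
      = (Finset.image ν Finset.univ \ s).orderIsoOfFin rfl ⟨a.val - s.card, h2⟩ := by
  simp [splitTuple, not_lt.2 h, h2]

lemma splitTuple_mem (hν : Function.Injective ν) (hs : s ⊆ Finset.image ν Finset.univ)
    (a : Fin l) : splitTuple ν s a ∈ Finset.image ν Finset.univ := by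
  by_cases h : a.val < s.card
  · rw [splitTuple_of_lt a h]
    exact hs (Subtype.prop _)
  · have h2 : a.val - s.card < (Finset.image ν Finset.univ \ s).card := by
      rw [card_image_sdiff hν hs]; omega
    rw [splitTuple_of_ge a (not_lt.1 h) h2]
    exact (Finset.mem_sdiff.1 (Subtype.prop _)).1

lemma splitTuple_injective (hν : Function.Injective ν) (hs : s ⊆ Finset.image ν Finset.univ) :
    Function.Injective (splitTuple ν s) := by
  have hge : ∀ a : Fin l, ¬ a.val < s.card →
      a.val - s.card < (Finset.image ν Finset.univ \ s).card := by
    intro a h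
    rw [card_image_sdiff hν hs]; omega
  have hmem : ∀ a : Fin l, splitTuple ν s a ∈ s ↔ a.val < s.card := by
    intro a
    by_cases h : a.val < s.card
    · rw [splitTuple_of_lt a h]
      exact ⟨fun _ => h, fun _ => Subtype.prop _⟩
    · rw [splitTuple_of_ge a (not_lt.1 h) (hge a h)]
      exact ⟨fun h' => absurd h' (Finset.mem_sdiff.1 (Subtype.prop _)).2, fun h' => absurd h' h⟩
  intro a b hab
  by_cases ha : a.val < s.card
  · have hb : b.val < s.card := by rwa [← hmem, ← hab, hmem]
    rw [splitTuple_of_lt a ha, splitTuple_of_lt b hb] at hab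
    have := (s.orderIsoOfFin rfl).injective (Subtype.ext hab)
    simp only [Fin.mk.injEq] at this
    exact Fin.ext this
  · have hb : ¬ b.val < s.card := by rwa [← hmem, ← hab, hmem]
    rw [splitTuple_of_ge a (not_lt.1 ha) (hge a ha),
      splitTuple_of_ge b (not_lt.1 hb) (hge b hb)] at hab
    have := ((Finset.image ν Finset.univ \ s).orderIsoOfFin rfl).injective (Subtype.ext hab)
    simp only [Fin.mk.injEq] at this
    apply Fin.ext
    omega

/-- The rows of the splitting matrix are orthonormal, so its determinant is `±1`. -/
lemma splitSign_mul_self (hν : Function.Injective ν) (hs : s ⊆ Finset.image ν Finset.univ) :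
    splitSign ν s * splitSign ν s = 1 := by
  unfold splitSign
  nth_rewrite 2 [← Matrix.det_transpose]
  rw [← Matrix.det_mul]
  convert Matrix.det_one (n := Fin l) (R := ℝ)
  ext a c
  obtain ⟨b, -, hb⟩ := Finset.mem_image.1 (splitTuple_mem hν hs a)
  rw [Matrix.mul_apply, Finset.sum_eq_single b]
  · simp [Matrix.one_apply, hb, (splitTuple_injective hν hs).eq_iff]
  · intro b' _ hb'
    have : ν b' ≠ splitTuple ν s a := fun h => hb' (hν (h.trans hb.symm))
    simp [this]
  · simp

/-- Reordering the columns of the matrix `G_a(ν_b)` according to the splitting makes it block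
triangular, with an identity block coming from the `dx`-rows. -/
lemma det_eq_splitSign_mul {q : ℕ} (hν : Function.Injective ν)
    (hs : s ⊆ Finset.image ν Finset.univ) (hl : s.card + q = l)
    (G : Fin l → Fin n → ℝ) (w : Fin q → Fin n → ℝ)
    (hG1 : ∀ (a : Fin l) (h : a.val < s.card) (i : Fin n),
      G a i = if (s.orderIsoOfFin rfl ⟨a.val, h⟩ : Fin n) = i then 1 else 0)
    (hG2 : ∀ (a : Fin l) (c : Fin q), a.val = s.card + c.val → G a = w c) :
    Matrix.det (Matrix.of fun a b => G a (ν b)) =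
      splitSign ν s * Matrix.det (Matrix.of fun (r c : Fin q) =>
        if h : r.val < (Finset.image ν Finset.univ \ s).card then
          w c ((Finset.image ν Finset.univ \ s).orderIsoOfFin rfl ⟨r.val, h⟩) else 0) := by
  subst hl
  have hcard : (Finset.image ν Finset.univ \ s).card = q := by
    rw [card_image_sdiff hν hs]; omega
  set M : Matrix (Fin (s.card + q)) (Fin (s.card + q)) ℝ := Matrix.of fun a b => G a (ν b) with hM
  set H : Matrix (Fin q) (Fin q) ℝ := Matrix.of fun (r c : Fin q) =>
        if h : r.val < (Finset.image ν Finset.univ \ s).card then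
          w c ((Finset.image ν Finset.univ \ s).orderIsoOfFin rfl ⟨r.val, h⟩) else 0 with hH
  have hprod : M.det * splitSign ν s
      = Matrix.det (Matrix.of fun a c => G a (splitTuple ν s c)) := by
    unfold splitSign
    nth_rewrite 2 [← Matrix.det_transpose]
    rw [← Matrix.det_mul]
    congr 1
    ext a c
    obtain ⟨b, -, hb⟩ := Finset.mem_image.1 (splitTuple_mem hν hs c)
    rw [Matrix.mul_apply, Finset.sum_eq_single b]
    · simp [hM, hb]
    · intro b' _ hb'
      have : ν b' ≠ splitTuple ν s c := fun h => hb' (hν (h.trans hb.symm))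
      simp [this]
    · simp
  have hblock : Matrix.det (Matrix.of fun a c => G a (splitTuple ν s c)) = H.det := by
    rw [← Matrix.det_submatrix_equiv_self finSumFinEquiv, ← Matrix.fromBlocks_toBlocks
      ((Matrix.of fun a c => G a (splitTuple ν s c)).submatrix finSumFinEquiv finSumFinEquiv)]
    have h12 : Matrix.toBlocks₁₂ ((Matrix.of fun a c =>
        G a (splitTuple ν s c)).submatrix finSumFinEquiv finSumFinEquiv) = 0 := by
      ext a c
      have hlt : (Fin.natAdd s.card c).val - s.card
          < (Finset.image ν Finset.univ \ s).card := by simp [hcard]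
      simp only [Matrix.toBlocks₁₂, Matrix.submatrix_apply, Matrix.of_apply,
        finSumFinEquiv_apply_left, finSumFinEquiv_apply_right, Matrix.zero_apply]
      rw [hG1 _ (by simp), if_neg]
      rw [splitTuple_of_ge _ (by simp) hlt]
      intro h
      refine (Finset.mem_sdiff.1 (Subtype.prop ((Finset.image ν Finset.univ \ s).orderIsoOfFin rfl
        ⟨_, hlt⟩))).2 ?_
      rw [← h]
      exact Subtype.prop _
    have h11 : Matrix.toBlocks₁₁ ((Matrix.of fun a c =>
        G a (splitTuple ν s c)).submatrix finSumFinEquiv finSumFinEquiv) = 1 := by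
      ext a c
      simp only [Matrix.toBlocks₁₁, Matrix.submatrix_apply, Matrix.of_apply,
        finSumFinEquiv_apply_left]
      rw [hG1 _ (by simp), splitTuple_of_lt _ (by simp)]
      simp [Matrix.one_apply]
    have h22 : Matrix.toBlocks₂₂ ((Matrix.of fun a c =>
        G a (splitTuple ν s c)).submatrix finSumFinEquiv finSumFinEquiv) = H.transpose := by
      ext a c
      have hlt : (Fin.natAdd s.card c).val - s.card
          < (Finset.image ν Finset.univ \ s).card := by simp [hcard]
      simp only [Matrix.toBlocks₂₂, Matrix.submatrix_apply, Matrix.of_apply,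
        finSumFinEquiv_apply_right, Matrix.transpose_apply, hH]
      rw [hG2 _ a (by simp), splitTuple_of_ge _ (by simp) hlt, dif_pos (by simp [hcard])]
      simp
    rw [h12, h11, h22, Matrix.det_fromBlocks_zero₁₂, Matrix.det_one, one_mul,
      Matrix.det_transpose]
  rw [← hblock, ← hprod, mul_comm, mul_assoc, splitSign_mul_self hν hs, mul_one]

end Determinants

/-! ### Pullback of the monomials of `Ψ` -/

section Monomials

variable {n m k : ℕ} [LinearOrder (Sym (Fin n) k)]

lemma formListM_eq (hk : 0 < k) (s : Finset (Fin n)) (T : Fin m → Finset (Sym (Fin n) k)) :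
    formListM hk s T = (s.sort (· ≤ ·)).map dxF
      ++ (colListM T).map (fun q => dpF q.1 (topIdx hk q.2)) := by
  simp [formListM, colListM, List.map_flatMap, Function.comp_def]

lemma length_formListM (hk : 0 < k) (s : Finset (Fin n)) (T : Fin m → Finset (Sym (Fin n) k)) :
    (formListM hk s T).length = s.card + (colListM T).length := by
  simp [formListM_eq]

lemma formListM_get_of_lt (hk : 0 < k) (s : Finset (Fin n)) (T : Fin m → Finset (Sym (Fin n) k))
    (a : Fin (formListM hk s T).length) (h : a.val < s.card) :
    (formListM hk s T).get a = dxF (s.orderIsoOfFin rfl ⟨a.val, h⟩ : Fin n) := by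
  simp only [List.get_eq_getElem, formListM_eq]
  rw [List.getElem_append_left (by simpa using h), List.getElem_map]
  rw [Finset.coe_orderIsoOfFin_apply, Finset.orderEmbOfFin_apply]
  rfl

lemma formListM_get_of_eq (hk : 0 < k) (s : Finset (Fin n)) (T : Fin m → Finset (Sym (Fin n) k))
    (a : Fin (formListM hk s T).length) (c : Fin (colListM T).length)
    (h : a.val = s.card + c.val) :
    (formListM hk s T).get a
      = dpF ((colListM T).get c).1 (topIdx hk ((colListM T).get c).2) := by
  simp only [List.get_eq_getElem, formListM_eq]
  rw [List.getElem_append_right (by simp [h]), List.getElem_map]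
  simp [h]

variable {l : ℕ} {z : Fin m → (Fin n → ℝ) → ℝ}

/-- The contribution of a single monomial of `Ψ`. When `s` is not contained in the image of `ν`,
a `dx`-row vanishes. -/
lemma wedge_formListM_apply (hk : 0 < k) (hz : ∀ α, ContDiff ℝ (⊤ : ℕ∞) (z α))
    (s : Finset (Fin n)) (T : Fin m → Finset (Sym (Fin n) k))
    (h : (formListM hk s T).length = l) (ν : Fin l → Fin n) (hν : Function.Injective ν)
    (x : Fin n → ℝ) :
    wedge (fun a => (formListM hk s T).get (Fin.cast h.symm a))
        (fun b => fderiv ℝ (jetSec (k := k) z) x (Pi.single (ν b) 1))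
      = if s ⊆ Finset.image ν Finset.univ then DeltaM z ν s T x else 0 := by
  have hl := h
  rw [length_formListM] at hl
  set G : Fin l → Fin n → ℝ := fun a i => (formListM hk s T).get (Fin.cast h.symm a)
    (fderiv ℝ (jetSec (k := k) z) x (Pi.single i 1)) with hG
  have hwedge : wedge (fun a => (formListM hk s T).get (Fin.cast h.symm a))
        (fun b => fderiv ℝ (jetSec (k := k) z) x (Pi.single (ν b) 1))
      = Matrix.det (Matrix.of fun a b => G a (ν b)) := by
    rw [← Matrix.det_transpose]
    rfl
  have hG1 : ∀ (a : Fin l) (h : a.val < s.card) (i : Fin n),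
      G a i = if (s.orderIsoOfFin rfl ⟨a.val, h⟩ : Fin n) = i then 1 else 0 := by
    intro a ha i
    simp only [hG]
    rw [formListM_get_of_lt hk s T _ (by simpa using ha), dxF_fderiv_jetSec hz]
    rfl
  rw [hwedge]
  split_ifs with hs
  · exact det_eq_splitSign_mul hν hs hl G
      (fun c i => pdM ((((colListM T).get c).2 : Sym (Fin n) k) : Multiset (Fin n))
        (pd i (z ((colListM T).get c).1)) x) hG1 (by
        intro a c hac
        funext i
        simp only [hG]
        rw [formListM_get_of_eq hk s T _ c (by simpa using hac), dpF_fderiv_jetSec hk hz])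
  · obtain ⟨i, his, hi⟩ := Finset.not_subset.1 hs
    obtain ⟨r, hr⟩ := (s.orderIsoOfFin rfl).surjective ⟨i, his⟩
    refine Matrix.det_eq_zero_of_row_eq_zero ⟨r.val, by omega⟩ fun b => ?_
    rw [Matrix.of_apply, hG1 _ r.2, if_neg]
    intro hb
    have hri : (s.orderIsoOfFin rfl r : Fin n) = i := by rw [hr]
    exact hi (Finset.mem_image.2 ⟨b, Finset.mem_univ _, hb.symm.trans hri⟩)

lemma pullback_PsiM_apply (hk : 0 < k)
    (A : Finset (Fin n) → (Fin m → Finset (Sym (Fin n) k)) → Jet n m k → ℝ)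
    (hz : ∀ α, ContDiff ℝ (⊤ : ℕ∞) (z α)) (ν : Fin l → Fin n) (hν : Function.Injective ν)
    (x : Fin n → ℝ) :
    pullback (jetSec (k := k) z) (PsiM hk A l) x (fun b => Pi.single (ν b) 1)
      = gmaeLHSM A z ν x := by
  have h0 : pullback (jetSec (k := k) z) (PsiM hk A l) x (fun b => Pi.single (ν b) 1)
      = PsiM hk A l (jetSec z x)
        (fun b => fderiv ℝ (jetSec (k := k) z) x (Pi.single (ν b) 1)) := rfl
  rw [h0]
  unfold PsiM gmaeLHSM
  have hsum : ∀ {ι : Type} (t : Finset ι) (f : ι → (Jet n m k) [⋀^Fin l]→ₗ[ℝ] ℝ)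
      (v : Fin l → Jet n m k), (∑ i ∈ t, f i) v = ∑ i ∈ t, f i v := fun t f v =>
    map_sum (⟨⟨fun g => g v, rfl⟩, fun _ _ => rfl⟩ : (Jet n m k) [⋀^Fin l]→ₗ[ℝ] ℝ →+ ℝ) f t
  simp only [hsum]
  rw [← Finset.sum_subset (Finset.subset_univ (Finset.image ν Finset.univ).powerset)]
  · refine Finset.sum_congr rfl fun s hs => Finset.sum_congr rfl fun T _ => ?_
    by_cases h : (formListM hk s T).length = l
    · rw [dif_pos h, if_pos (by rw [← length_formListM hk, h]), AlternatingMap.smul_apply,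
        wedge_formListM_apply hk hz s T h ν hν, if_pos (Finset.mem_powerset.1 hs), smul_eq_mul]
    · rw [dif_neg h, if_neg (by rwa [← length_formListM hk]), AlternatingMap.zero_apply]
  · refine fun s _ hs => Finset.sum_eq_zero fun T _ => ?_
    by_cases h : (formListM hk s T).length = l
    · rw [dif_pos h, AlternatingMap.smul_apply, wedge_formListM_apply hk hz s T h ν hν,
        if_neg (fun h' => hs (Finset.mem_powerset.2 h')), smul_zero]
    · rw [dif_neg h, AlternatingMap.zero_apply]

end Monomials

/-- For the `l`-form
`Ψ = Σ A^{I^{α_1}_1…I^{α_t}_{λ_t}}_{i_1…i_{λ₀}} dx's ∧ dp's` on `J^k(n,m)`, the pullback of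
`Ψ` along the `k`-jet section of `(z^1,…,z^m)` vanishes identically iff `(z^1,…,z^m)` solves
the generalized Monge–Ampère equation `Σ A·Δ = 0` for all `1 ≤ ν_1 < … < ν_l ≤ n`. -/
theorem statement4 (n m k l : ℕ) (hn : 1 ≤ n) (hm : 1 ≤ m) (hk : 1 ≤ k)
    (hl1 : 1 ≤ l) (hln : l ≤ n) [LinearOrder (Sym (Fin n) k)]
    (A : Finset (Fin n) → (Fin m → Finset (Sym (Fin n) k)) → Jet n m k → ℝ)
    (hA : ∀ s T, ContDiff ℝ (⊤ : ℕ∞) (A s T))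
    (z : Fin m → (Fin n → ℝ) → ℝ) (hz : ∀ α, ContDiff ℝ (⊤ : ℕ∞) (z α)) :
    (∀ (x : Fin n → ℝ) (v : Fin l → (Fin n → ℝ)),
        pullback (jetSec (k := k) z) (PsiM hk A l) x v = 0)
    ↔ (∀ ν : Fin l → Fin n, StrictMono ν → ∀ x : Fin n → ℝ,
        gmaeLHSM A z ν x = 0) := by
  constructor
  · intro h ν hν x
    rw [← pullback_PsiM_apply hk A hz ν hν.injective x]
    exact h x _
  · intro h x v
    have h0 : pullback (jetSec (k := k) z) (PsiM hk A l) x = 0 :=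
      alternating_eq_zero_of_strictMono _ fun ν hν => by
        rw [pullback_PsiM_apply hk A hz ν hν.injective x, h ν hν x]
    rw [h0, AlternatingMap.zero_apply]

end GMAE
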